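/- Let I_n be the number of inversions of a uniformly random permutation of S_n. Then E(I_n) = n(n−1)/4, Var(I_n) = n(2n+5)(n−1)/72, and there exists a constant C > 0 such that for all n ≥ 2, sup over x ∈ ℝ of | P( (I_n − n(n−1)/4) / sqrt( n(2n+5)(n−1)/72 ) ≤ x ) − Φ(x) | ≤ C / sqrt(n), where Φ is the standard normal CDF. -/

import Mathlib

open Finset

/-- The number of inversions of a permutation: the number of pairs `i < j` with
`π i > π j`. -/
def inversions {n : ℕ} (π : Equiv.Perm (Fin n)) : ℕ :=
  (Finset.univ.filter (fun p : Fin n × Fin n => p.1 < p.2 ∧ π p.2 < π p.1)).card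

/-- The standard normal cumulative distribution function
`Φ(x) = ∫_{-∞}^x (1/√(2π)) e^{-t²/2} dt`. -/
noncomputable def stdNormalCDF (x : ℝ) : ℝ :=
  ∫ t in Set.Iic x, (1 / Real.sqrt (2 * Real.pi)) * Real.exp (-t ^ 2 / 2)

/-!
The number of smaller entries to the right of an entry of a uniformly random permutation is uniform
and independent of the relative order of the entries on its right. So `I_n` is a sum of independent
digits, uniform on `{0, …, i}` for `i < n` (the Lehmer code), which gives mean and variance.

The normal approximation is Stein's method for a sum `W` of independent centred bounded variables
`ξ i` with total variance `1`. Conditionally on the other summands `E[ξ i * f W]` is a covariance,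
and symmetrizing it with an independent copy of `ξ i` compares it with `Var (ξ i)` times a slope of
`f` near `W`. Summing over `i`, `E[W * f W]` differs from `E[f' W]` by at most the oscillation of
`f'` on the scale `δ = max diam (ξ i)`. For `f` a truncated identity this bounds the probability
that `W` falls into a window of length `2 * δ`; with this, for the solution of Stein's equation of a
half-line, it bounds the distance to the normal distribution function by `7 * δ`, without smoothing.
For the standardized digits `δ` is at most `n / √(n ^ 3 / 36) = 6 / √n`.
-/

section

open MeasureTheory ProbabilityTheory Set

local notation "φ" => gaussianPDFReal 0 1
local notation "Φ" => stdNormalCDF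

section GaussianTail

lemma stdGaussianPDF_eq (x : ℝ) : φ x = 1 / √(2 * Real.pi) * Real.exp (-x ^ 2 / 2) := by
  simp [gaussianPDFReal]

lemma stdGaussianPDF_pos (x : ℝ) : 0 < φ x := gaussianPDFReal_pos 0 1 x one_ne_zero

lemma stdGaussianPDF_neg (x : ℝ) : φ (-x) = φ x := by simp [stdGaussianPDF_eq]

lemma hasDerivAt_stdGaussianPDF (x : ℝ) : HasDerivAt φ (-x * φ x) x := by
  have hexponent : HasDerivAt (fun t : ℝ => -t ^ 2 / 2) (-x) x :=
    (((hasDerivAt_pow 2 x).fun_neg).div_const 2).congr_deriv (by norm_num; ring)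
  rw [funext stdGaussianPDF_eq]
  exact (hexponent.exp.const_mul _).congr_deriv (by ring)

lemma continuous_stdGaussianPDF : Continuous φ :=
  continuous_iff_continuousAt.2 fun x => (hasDerivAt_stdGaussianPDF x).continuousAt

lemma tendsto_stdGaussianPDF_atTop : Filter.Tendsto φ Filter.atTop (nhds 0) := by
  have hexponent : Filter.Tendsto (fun t : ℝ => -t ^ 2 / 2) Filter.atTop Filter.atBot :=
    (Filter.tendsto_neg_atTop_atBot.comp (Filter.tendsto_pow_atTop two_ne_zero)).atBot_div_const
      two_pos
  rw [funext stdGaussianPDF_eq]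
  simpa using (Real.tendsto_exp_atBot.comp hexponent).const_mul (1 / √(2 * Real.pi))

lemma stdNormalCDF_eq_setIntegral (x : ℝ) : Φ x = ∫ t in Iic x, φ t := by
  simp only [stdNormalCDF, stdGaussianPDF_eq]

lemma stdNormalCDF_eq_measureReal (x : ℝ) : Φ x = (gaussianReal 0 1).real (Iic x) := by
  rw [measureReal_def, gaussianReal_apply_eq_integral 0 one_ne_zero, stdNormalCDF_eq_setIntegral,
    ENNReal.toReal_ofReal (integral_nonneg fun t => (stdGaussianPDF_pos t).le)]

lemma stdNormalCDF_nonneg (x : ℝ) : 0 ≤ Φ x := by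
  rw [stdNormalCDF_eq_measureReal]; exact measureReal_nonneg

lemma stdNormalCDF_le_one (x : ℝ) : Φ x ≤ 1 := by
  rw [stdNormalCDF_eq_measureReal]; exact measureReal_le_one

lemma monotone_stdNormalCDF : Monotone Φ := fun a b hab => by
  simp only [stdNormalCDF_eq_measureReal]
  exact measureReal_mono (Iic_subset_Iic.2 hab)

lemma one_sub_stdNormalCDF (x : ℝ) : 1 - Φ x = ∫ t in Ioi x, φ t := by
  have hint := integrable_gaussianPDFReal 0 1
  rw [stdNormalCDF_eq_setIntegral, ← integral_gaussianPDFReal_eq_one 0 one_ne_zero,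
    ← intervalIntegral.integral_Iic_add_Ioi (b := x) hint.integrableOn hint.integrableOn,
    add_sub_cancel_left]

lemma stdNormalCDF_neg (x : ℝ) : Φ (-x) = 1 - Φ x := by
  rw [one_sub_stdNormalCDF, stdNormalCDF_eq_setIntegral]
  simpa only [stdGaussianPDF_neg, neg_neg] using integral_comp_neg_Iic (-x) φ

lemma hasDerivAt_stdNormalCDF (x : ℝ) : HasDerivAt Φ (φ x) x := by
  have hint := integrable_gaussianPDFReal 0 1
  have hΦ : Φ = fun u => (∫ t in (0 : ℝ)..u, φ t) + Φ 0 := by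
    funext u
    rw [stdNormalCDF_eq_setIntegral, stdNormalCDF_eq_setIntegral,
      ← intervalIntegral.integral_Iic_sub_Iic hint.integrableOn hint.integrableOn, sub_add_cancel]
  rw [hΦ]
  exact (continuous_stdGaussianPDF.integral_hasStrictDerivAt 0 x).hasDerivAt.add_const _

lemma continuous_stdNormalCDF : Continuous Φ :=
  continuous_iff_continuousAt.2 fun x => (hasDerivAt_stdNormalCDF x).continuousAt

lemma mul_one_sub_stdNormalCDF_le {x : ℝ} (hx : 0 ≤ x) : x * (1 - Φ x) ≤ φ x := by
  have hderiv : ∀ t ∈ Ici x, HasDerivAt (fun t => -φ t) (t * φ t) t := fun t _ =>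
    (hasDerivAt_stdGaussianPDF t).fun_neg.congr_deriv (by ring)
  have hnonneg : ∀ t ∈ Ioi x, 0 ≤ t * φ t := fun t ht =>
    mul_nonneg (hx.trans (mem_Ioi.1 ht).le) (stdGaussianPDF_pos t).le
  have hlim : Filter.Tendsto (fun t => -φ t) Filter.atTop (nhds 0) := by
    simpa using tendsto_stdGaussianPDF_atTop.neg
  calc x * (1 - Φ x) = ∫ t in Ioi x, x * φ t := by
        rw [one_sub_stdNormalCDF, integral_const_mul]
    _ ≤ ∫ t in Ioi x, t * φ t :=
        setIntegral_mono_on ((integrable_gaussianPDFReal 0 1).const_mul x).integrableOn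
          (integrableOn_Ioi_deriv_of_nonneg' hderiv hnonneg hlim) measurableSet_Ioi
          fun t ht => mul_le_mul_of_nonneg_right (mem_Ioi.1 ht).le (stdGaussianPDF_pos t).le
    _ = φ x := by
        rw [integral_Ioi_of_hasDerivAt_of_nonneg' hderiv hnonneg hlim, sub_neg_eq_add, zero_add]

lemma one_sub_stdNormalCDF_le_half {x : ℝ} (hx : 0 ≤ x) : 1 - Φ x ≤ 1 / 2 := by
  have hmono : Φ (-x) ≤ Φ x := monotone_stdNormalCDF (by linarith)
  rw [stdNormalCDF_neg] at hmono
  linarith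

lemma one_sixth_le_stdGaussianPDF {x : ℝ} (hx : |x| ≤ 1) : 1 / 6 ≤ φ x := by
  have hsqrt : √(2 * Real.pi) ≤ 3 := Real.sqrt_le_iff.2 ⟨by norm_num, by linarith [Real.pi_lt_d2]⟩
  have hexp : 1 / 2 ≤ Real.exp (-x ^ 2 / 2) := by
    linarith [Real.add_one_le_exp (-x ^ 2 / 2), (sq_le_one_iff_abs_le_one x).2 hx]
  calc (1 / 6 : ℝ) = 1 / 3 * (1 / 2) := by norm_num
    _ ≤ 1 / √(2 * Real.pi) * Real.exp (-x ^ 2 / 2) := by gcongr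
    _ = φ x := (stdGaussianPDF_eq x).symm

lemma one_sub_stdNormalCDF_le_three_mul {x : ℝ} (hx : 0 ≤ x) : 1 - Φ x ≤ 3 * φ x := by
  rcases le_total x 1 with hx1 | hx1
  · linarith [one_sub_stdNormalCDF_le_half hx,
      one_sixth_le_stdGaussianPDF (abs_le.2 ⟨by linarith, hx1⟩)]
  · linarith [mul_one_sub_stdNormalCDF_le hx, stdGaussianPDF_pos x,
      le_mul_of_one_le_left (sub_nonneg.2 (stdNormalCDF_le_one x)) hx1]

end GaussianTail

section SteinSolution

/-- The bounded solution `f` of Stein's equation `f' w - w * f w = 1_{w ≤ z} - Φ z` for the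
half-line `(-∞, z]`, both branches `w ≤ z` and `z ≤ w` being covered by one formula. -/
noncomputable def steinSolution (z w : ℝ) : ℝ := Φ (min w z) * (1 - Φ (max w z)) / φ w

/-- The derivative of `steinSolution z`, as prescribed by Stein's equation; at the kink `w = z` this
is the left derivative. -/
noncomputable def steinDeriv (z w : ℝ) : ℝ :=
  w * steinSolution z w + (Iic z).indicator 1 w - Φ z

lemma continuous_steinSolution (z : ℝ) : Continuous (steinSolution z) := by
  have hΦ := continuous_stdNormalCDF
  exact ((hΦ.comp (continuous_id.min continuous_const)).mul
    (continuous_const.sub (hΦ.comp (continuous_id.max continuous_const)))).div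
    continuous_stdGaussianPDF fun w => (stdGaussianPDF_pos w).ne'

lemma measurable_steinDeriv (z : ℝ) : Measurable (steinDeriv z) :=
  ((measurable_id.mul (continuous_steinSolution z).measurable).add
    (measurable_one.indicator measurableSet_Iic)).sub_const _

lemma steinSolution_nonneg (z w : ℝ) : 0 ≤ steinSolution z w :=
  div_nonneg (mul_nonneg (stdNormalCDF_nonneg _) (sub_nonneg.2 (stdNormalCDF_le_one _)))
    (stdGaussianPDF_pos w).le

lemma steinSolution_neg_neg (z w : ℝ) : steinSolution (-z) (-w) = steinSolution z w := by
  simp only [steinSolution, ← neg_inf, ← neg_sup, stdNormalCDF_neg, stdGaussianPDF_neg,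
    sub_sub_cancel, mul_comm]

lemma steinSolution_le_millsRatio (z w : ℝ) : steinSolution z w ≤ (1 - Φ |w|) / φ |w| := by
  wlog hw : 0 ≤ w generalizing z w
  · simpa only [steinSolution_neg_neg, abs_neg] using this (-z) (-w) (by linarith)
  rw [abs_of_nonneg hw]
  refine div_le_div_of_nonneg_right ?_ (stdGaussianPDF_pos w).le
  calc Φ (min w z) * (1 - Φ (max w z)) ≤ 1 * (1 - Φ w) :=
        mul_le_mul (stdNormalCDF_le_one _)
          (sub_le_sub_left (monotone_stdNormalCDF (le_max_left w z)) 1)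
          (sub_nonneg.2 (stdNormalCDF_le_one _)) zero_le_one
    _ = 1 - Φ w := one_mul _

lemma steinSolution_le_three (z w : ℝ) : steinSolution z w ≤ 3 :=
  (steinSolution_le_millsRatio z w).trans <|
    (div_le_iff₀ (stdGaussianPDF_pos _)).2 (one_sub_stdNormalCDF_le_three_mul (abs_nonneg w))

lemma abs_mul_steinSolution_le_one (z w : ℝ) : |w * steinSolution z w| ≤ 1 := by
  rw [abs_mul, abs_of_nonneg (steinSolution_nonneg z w)]
  calc |w| * steinSolution z w ≤ |w| * ((1 - Φ |w|) / φ |w|) := by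
        gcongr; exact steinSolution_le_millsRatio z w
    _ ≤ 1 := by
        rw [← mul_div_assoc, div_le_one (stdGaussianPDF_pos _)]
        exact mul_one_sub_stdNormalCDF_le (abs_nonneg w)

lemma hasDerivAt_div_stdGaussianPDF {g : ℝ → ℝ} {g' w : ℝ} (hg : HasDerivAt g g' w) :
    HasDerivAt (fun t => g t / φ t) (w * (g w / φ w) + g' / φ w) w := by
  have hφ := (stdGaussianPDF_pos w).ne'
  exact (hg.fun_div (hasDerivAt_stdGaussianPDF w) hφ).congr_deriv (by field_simp; ring)

lemma hasDerivWithinAt_steinSolution (z w : ℝ) :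
    HasDerivWithinAt (steinSolution z)
      (w * steinSolution z w + (Iio z).indicator 1 w - Φ z) (Ici w) w := by
  have hφ := (stdGaussianPDF_pos w).ne'
  rcases lt_or_ge w z with hwz | hzw
  · have hleft : ∀ t ≤ z, steinSolution z t = Φ t * (1 - Φ z) / φ t := fun t ht => by
      rw [steinSolution, min_eq_left ht, max_eq_right ht]
    have hderiv := hasDerivAt_div_stdGaussianPDF
      ((hasDerivAt_stdNormalCDF w).mul_const (1 - Φ z))
    refine ((hderiv.congr_of_eventuallyEq ?_).congr_deriv ?_).hasDerivWithinAt
    · filter_upwards [Iio_mem_nhds hwz] with t ht using hleft t (le_of_lt ht)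
    · rw [hleft w hwz.le, indicator_of_mem (Set.mem_Iio.2 hwz), Pi.one_apply,
        mul_div_cancel_left₀ _ hφ, add_sub_assoc]
  · have hright : ∀ t ≥ z, steinSolution z t = Φ z * (1 - Φ t) / φ t := fun t ht => by
      rw [steinSolution, min_eq_right ht, max_eq_left ht]
    have hderiv := hasDerivAt_div_stdGaussianPDF
      (((hasDerivAt_stdNormalCDF w).const_sub 1).const_mul (Φ z))
    refine (hderiv.congr_deriv ?_).hasDerivWithinAt.congr
      (fun t ht => hright t (hzw.trans ht)) (hright w hzw)
    rw [hright w hzw, indicator_of_notMem (notMem_Iio.2 hzw), mul_neg, neg_div,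
      mul_div_cancel_right₀ _ hφ, add_zero]
    rfl

lemma abs_steinSolution_sub_le (z a b : ℝ) :
    |steinSolution z b - steinSolution z a| ≤ 2 * |b - a| := by
  wlog hab : a ≤ b generalizing a b
  · simpa only [abs_sub_comm] using this b a (le_of_not_ge hab)
  rw [abs_of_nonneg (sub_nonneg.2 hab)]
  refine norm_image_sub_le_of_norm_deriv_right_le_segment (continuous_steinSolution z).continuousOn
    (fun w _ => hasDerivWithinAt_steinSolution z w) (fun w _ => ?_) b ⟨hab, le_rfl⟩
  have hmul := abs_le.1 (abs_mul_steinSolution_le_one z w)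
  have hΦ0 := stdNormalCDF_nonneg z
  have hΦ1 := stdNormalCDF_le_one z
  rw [Real.norm_eq_abs, abs_le]
  by_cases hwz : w ∈ Iio z
  · simp only [indicator_of_mem hwz, Pi.one_apply]; constructor <;> linarith
  · simp only [indicator_of_notMem hwz]; constructor <;> linarith

lemma abs_mul_steinSolution_sub_le (z a b : ℝ) :
    |b * steinSolution z b - a * steinSolution z a| ≤ (2 * |a| + 3) * |b - a| := by
  have hsplit : b * steinSolution z b - a * steinSolution z a
      = a * (steinSolution z b - steinSolution z a) + (b - a) * steinSolution z b := by ring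
  calc |b * steinSolution z b - a * steinSolution z a|
      ≤ |a| * |steinSolution z b - steinSolution z a| + |b - a| * |steinSolution z b| := by
        rw [hsplit, ← abs_mul, ← abs_mul]; exact abs_add_le _ _
    _ ≤ |a| * (2 * |b - a|) + |b - a| * 3 := by
        gcongr
        · exact abs_steinSolution_sub_le z a b
        · rw [abs_of_nonneg (steinSolution_nonneg z b)]; exact steinSolution_le_three z b
    _ = (2 * |a| + 3) * |b - a| := by ring

/-- The error made in replacing a difference quotient of `steinSolution z`, taken within distance
`δ` of `w`, by `steinDeriv z w`. -/
noncomputable def steinError (z δ w : ℝ) : ℝ :=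
  (2 * |w| + 3) * δ + (Metric.closedBall z δ).indicator 1 w

lemma measurable_steinError (z δ : ℝ) : Measurable (steinError z δ) :=
  (by fun_prop : Measurable fun w : ℝ => (2 * |w| + 3) * δ).add
    (measurable_one.indicator Metric.isClosed_closedBall.measurableSet)

lemma abs_indicator_Iio_sub_indicator_Iic_le {z δ w c : ℝ} (hc : c ∈ Set.Ico (w - δ) (w + δ)) :
    |(Iio z).indicator 1 c - (Iic z).indicator 1 w|
      ≤ (Metric.closedBall z δ).indicator (1 : ℝ → ℝ) w := by
  rcases hc with ⟨hwc, hcw⟩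
  have hball : w ∈ Metric.closedBall z δ ↔ z - δ ≤ w ∧ w ≤ z + δ := by
    rw [Real.closedBall_eq_Icc, Set.mem_Icc]
  classical
  simp only [indicator_apply, Set.mem_Iio, Set.mem_Iic, hball, Pi.one_apply]
  split_ifs <;> norm_num <;> grind

lemma abs_steinSolution_sub_sub_mul_steinDeriv_le {z δ w a b : ℝ}
    (ha : w - δ ≤ a) (hab : a ≤ b) (hb : b ≤ w + δ) :
    |steinSolution z b - steinSolution z a - (b - a) * steinDeriv z w|
      ≤ (b - a) * steinError z δ w := by
  have hmvt := norm_image_sub_le_of_norm_deriv_right_le_segment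
    (f := fun t => steinSolution z t - t * steinDeriv z w) (C := steinError z δ w) (a := a) (b := b)
    ((continuous_steinSolution z).sub (continuous_mul_const _)).continuousOn
    (fun c _ => (hasDerivWithinAt_steinSolution z c).sub
      ((hasDerivWithinAt_id c _).mul_const (steinDeriv z w)))
    (fun c hc => ?_) b ⟨hab, le_rfl⟩
  · rw [Real.norm_eq_abs] at hmvt
    convert hmvt using 1
    · congr 1; ring
    · ring
  · have hcw : c ∈ Set.Ico (w - δ) (w + δ) := ⟨ha.trans hc.1, hc.2.trans_le hb⟩
    have hdist : |c - w| ≤ δ := abs_le.2 ⟨by linarith [hcw.1], by linarith [hcw.2]⟩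
    calc |c * steinSolution z c + (Iio z).indicator 1 c - Φ z - 1 * steinDeriv z w|
        = |(c * steinSolution z c - w * steinSolution z w)
            + ((Iio z).indicator 1 c - (Iic z).indicator 1 w)| := by
          rw [steinDeriv]; congr 1; ring
      _ ≤ (2 * |w| + 3) * |c - w| + (Metric.closedBall z δ).indicator 1 w :=
          (abs_add_le _ _).trans (add_le_add (abs_mul_steinSolution_sub_le z w c)
            (abs_indicator_Iio_sub_indicator_Iic_le hcw))
      _ ≤ steinError z δ w := by unfold steinError; gcongr

end SteinSolution

section SteinWindow

/-- `HasSteinWindow μ δ` is the one-sided form, for the law `μ` of a centred random variable `W` of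
variance `1`, of the existence of a zero-bias coupling: a `W'` with `|W' - W| ≤ δ` and
`E[W f(W)] = E[f'(W')]`. The majorant `u w` of the slopes of `f` within distance `δ` of `w` stands
in for `f'(W')`, so that no coupling has to be constructed. -/
def HasSteinWindow (μ : Measure ℝ) (δ : ℝ) : Prop :=
  ∀ ⦃f u : ℝ → ℝ⦄, Measurable f → (∃ C, ∀ x, |f x| ≤ C) → Measurable u → Integrable u μ →
    (∀ w a b, w - δ ≤ a → a ≤ b → b ≤ w + δ → f b - f a ≤ (b - a) * u w) →
    ∫ x, x * f x ∂μ ≤ ∫ x, u x ∂μ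

variable {μ : Measure ℝ} [IsProbabilityMeasure μ] {δ : ℝ}

lemma HasSteinWindow.measureReal_closedBall_le (hμ : HasSteinWindow μ δ) (hδ : 0 ≤ δ)
    (hint : Integrable id μ) (hmean : ∫ x, |x| ∂μ ≤ 1) (z : ℝ) :
    μ.real (Metric.closedBall z δ) ≤ 2 * δ := by
  set clip : ℝ → ℝ := fun x => max (-(2 * δ)) (min (x - z) (2 * δ)) with hclip
  have hclip_bound : ∀ x, |clip x| ≤ 2 * δ := fun x => by
    rw [abs_le, hclip]; grind
  have hball : MeasurableSet (Metric.closedBall z δ) := Metric.isClosed_closedBall.measurableSet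
  have hclip_slope : ∀ w a b, w - δ ≤ a → a ≤ b → b ≤ w + δ →
      -clip b - -clip a ≤ (b - a) * -(Metric.closedBall z δ).indicator 1 w := by
    intro w a b ha hab hb
    by_cases hw : w ∈ Metric.closedBall z δ
    · rw [indicator_of_mem hw, Pi.one_apply, hclip]
      rw [Real.closedBall_eq_Icc, Set.mem_Icc] at hw
      grind
    · rw [indicator_of_notMem hw, hclip]
      grind
  have hstein := hμ (by fun_prop : Measurable fun x => -clip x)
    ⟨2 * δ, fun x => by rw [abs_neg]; exact hclip_bound x⟩
    (measurable_one.indicator hball).neg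
    (((integrable_const 1).indicator hball).neg) hclip_slope
  simp only [Pi.neg_apply, integral_neg, mul_neg, neg_le_neg_iff, integral_indicator_one hball]
    at hstein
  calc μ.real (Metric.closedBall z δ) ≤ ∫ x, x * clip x ∂μ := hstein
    _ ≤ ∫ x, |x| * (2 * δ) ∂μ :=
        (le_abs_self _).trans <| norm_integral_le_of_norm_le (hint.abs.mul_const (2 * δ)) <|
          .of_forall fun x => by
            rw [Real.norm_eq_abs, abs_mul]
            exact mul_le_mul_of_nonneg_left (hclip_bound x) (abs_nonneg x)
    _ ≤ 2 * δ := by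
        rw [integral_mul_const]
        exact mul_le_of_le_one_left (by positivity) hmean

lemma integrable_steinError (hint : Integrable id μ) (z : ℝ) :
    Integrable (steinError z δ) μ :=
  (((hint.abs.const_mul 2).add (integrable_const 3)).mul_const δ).add
    ((integrable_const 1).indicator Metric.isClosed_closedBall.measurableSet)

lemma HasSteinWindow.integral_steinError_le (hμ : HasSteinWindow μ δ) (hδ : 0 ≤ δ)
    (hint : Integrable id μ) (hmean : ∫ x, |x| ∂μ ≤ 1) (z : ℝ) :
    ∫ x, steinError z δ x ∂μ ≤ 7 * δ := by
  have hball : MeasurableSet (Metric.closedBall z δ) := Metric.isClosed_closedBall.measurableSet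
  have habs : Integrable (fun x : ℝ => 2 * |x|) μ := hint.abs.const_mul 2
  have hlin : Integrable (fun x : ℝ => (2 * |x| + 3) * δ) μ :=
    (habs.add (integrable_const 3)).mul_const δ
  have hone : Integrable ((Metric.closedBall z δ).indicator (1 : ℝ → ℝ)) μ :=
    (integrable_const 1).indicator hball
  calc ∫ x, steinError z δ x ∂μ
      = (2 * ∫ x, |x| ∂μ + 3) * δ + μ.real (Metric.closedBall z δ) := by
        simp only [steinError]
        rw [integral_add hlin hone, integral_indicator_one hball, integral_mul_const,
          integral_add habs (integrable_const 3), integral_const_mul, integral_const,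
          probReal_univ, one_smul]
    _ ≤ (2 * 1 + 3) * δ + 2 * δ := by
        gcongr
        exact hμ.measureReal_closedBall_le hδ hint hmean z
    _ = 7 * δ := by ring

lemma integrable_mul_steinSolution (z : ℝ) : Integrable (fun x => x * steinSolution z x) μ :=
  .of_bound (measurable_id.mul (continuous_steinSolution z).measurable).aestronglyMeasurable 1 <|
    .of_forall (abs_mul_steinSolution_le_one z)

lemma integrable_steinDeriv (z : ℝ) : Integrable (steinDeriv z) μ :=
  ((integrable_mul_steinSolution z).add
    ((integrable_const 1).indicator measurableSet_Iic)).sub (integrable_const _)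

lemma integral_steinDeriv (z : ℝ) :
    ∫ x, steinDeriv z x ∂μ = ∫ x, x * steinSolution z x ∂μ + (μ.real (Iic z) - Φ z) := by
  have hsolution := integrable_mul_steinSolution (μ := μ) z
  have hindicator : Integrable ((Iic z).indicator (1 : ℝ → ℝ)) μ :=
    (integrable_const 1).indicator measurableSet_Iic
  have hsum : Integrable (fun x => x * steinSolution z x + (Iic z).indicator 1 x) μ :=
    hsolution.add hindicator
  simp only [steinDeriv]
  rw [integral_sub hsum (integrable_const _),
    integral_add hsolution hindicator, integral_indicator_one measurableSet_Iic, integral_const,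
    probReal_univ, one_smul, add_sub_assoc]

theorem HasSteinWindow.abs_measureReal_Iic_sub_stdNormalCDF_le (hμ : HasSteinWindow μ δ)
    (hδ : 0 ≤ δ) (hint : Integrable id μ) (hmean : ∫ x, |x| ∂μ ≤ 1) (z : ℝ) :
    |μ.real (Iic z) - Φ z| ≤ 7 * δ := by
  have hmeas := (continuous_steinSolution z).measurable
  have hbound : ∀ x, |steinSolution z x| ≤ 3 := fun x => by
    rw [abs_of_nonneg (steinSolution_nonneg z x)]; exact steinSolution_le_three z x
  have hslope := fun w a b (ha : w - δ ≤ a) (hab : a ≤ b) (hb : b ≤ w + δ) =>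
    abs_le.1 (abs_steinSolution_sub_sub_mul_steinDeriv_le (z := z) ha hab hb)
  have hderiv := integrable_steinDeriv (μ := μ) z
  have herror := integrable_steinError (δ := δ) hint z
  have herror_le := hμ.integral_steinError_le hδ hint hmean z
  have hupper := hμ hmeas ⟨3, hbound⟩
    ((measurable_steinDeriv z).add (measurable_steinError z δ)) (hderiv.add herror)
    fun w a b ha hab hb => by
      have := (hslope w a b ha hab hb).2
      simp only [Pi.add_apply]
      linarith
  have hlower := hμ hmeas.neg ⟨3, fun x => by simpa using hbound x⟩
    ((measurable_steinError z δ).sub (measurable_steinDeriv z)) (herror.sub hderiv)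
    fun w a b ha hab hb => by
      have := (hslope w a b ha hab hb).1
      simp only [Pi.neg_apply, Pi.sub_apply]
      linarith
  simp only [Pi.add_apply, integral_add hderiv herror, integral_steinDeriv] at hupper
  simp only [Pi.neg_apply, Pi.sub_apply, mul_neg, integral_neg, integral_sub herror hderiv,
    integral_steinDeriv] at hlower
  rw [abs_le]
  constructor <;> linarith

end SteinWindow

section Covariance

variable {Ω : Type*} [MeasurableSpace Ω] {P : Measure Ω} [IsProbabilityMeasure P] {X Y : Ω → ℝ}

lemma integral_sub_mul_sub (hX : MemLp X 2 P) (hY : MemLp Y 2 P) (a b : ℝ) :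
    ∫ ω, (X ω - a) * (Y ω - b) ∂P = cov[X, Y; P] + (P[X] - a) * (P[Y] - b) := by
  have hXint := hX.integrable one_le_two
  have hYint := hY.integrable one_le_two
  have hcov : cov[X, Y; P] = cov[fun ω => X ω - a, fun ω => Y ω - b; P] := by
    rw [covariance_sub_const_left hXint, covariance_sub_const_right hYint]
  have hXmean : ∫ ω, (X ω - a) ∂P = P[X] - a := by
    rw [integral_sub hXint (integrable_const a), integral_const, probReal_univ, one_smul]
  have hYmean : ∫ ω, (Y ω - b) ∂P = P[Y] - b := by
    rw [integral_sub hYint (integrable_const b), integral_const, probReal_univ, one_smul]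
  rw [hcov, covariance_eq_sub (X := fun ω => X ω - a) (Y := fun ω => Y ω - b)
    (hX.sub (memLp_const a)) (hY.sub (memLp_const b)), hXmean, hYmean, sub_add_cancel]
  rfl

lemma covariance_nonneg_of_monovary (hX : MemLp X 2 P) (hY : MemLp Y 2 P) (h : Monovary X Y) :
    0 ≤ cov[X, Y; P] := by
  have hslice : ∀ ω, 0 ≤ cov[X, Y; P] + (X ω - P[X]) * (Y ω - P[Y]) := fun ω => by
    rw [← neg_mul_neg, neg_sub, neg_sub, ← integral_sub_mul_sub hX hY]
    exact integral_nonneg fun ω' => h.sub_mul_sub_nonneg ω ω'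
  have hcentred : Integrable (fun ω => (X ω - P[X]) * (Y ω - P[Y])) P :=
    (hX.sub (memLp_const P[X])).integrable_mul (hY.sub (memLp_const P[Y]))
  have hdouble : 0 ≤ ∫ ω, (cov[X, Y; P] + (X ω - P[X]) * (Y ω - P[Y])) ∂P := integral_nonneg hslice
  rw [integral_add (integrable_const _) hcentred, integral_const, probReal_univ, one_smul,
    ← covariance] at hdouble
  linarith

lemma covariance_le_mul_variance {c : ℝ} (hX : MemLp X 2 P) (hY : MemLp Y 2 P)
    (h : ∀ ω ω', (X ω' - X ω) * (Y ω' - Y ω) ≤ c * (X ω' - X ω) ^ 2) :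
    cov[X, Y; P] ≤ c * Var[X; P] := by
  have hmono : Monovary X (c • X - Y) := monovary_iff_forall_mul_nonneg.2 fun ω ω' => by
    have := h ω ω'
    simp only [Pi.sub_apply, Pi.smul_apply, smul_eq_mul]
    linarith
  have hcov := covariance_nonneg_of_monovary hX ((hX.const_smul c).sub hY) hmono
  have hcX : MemLp (c • X) 2 P := hX.const_smul c
  rwa [covariance_sub_right hX hcX hY, covariance_smul_right,
    covariance_self hX.aemeasurable, sub_nonneg] at hcov

lemma memLp_of_forall_abs_sub_le {D : ℝ} (hX : AEStronglyMeasurable X P)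
    (hD : ∀ ω ω', |X ω - X ω'| ≤ D) (p : ENNReal) : MemLp X p P := by
  obtain ⟨ω₀⟩ := P.nonempty_of_neZero
  refine .of_bound hX (D + |X ω₀|) (.of_forall fun ω => ?_)
  calc |X ω| = |(X ω - X ω₀) + X ω₀| := by rw [sub_add_cancel]
    _ ≤ |X ω - X ω₀| + |X ω₀| := abs_add_le _ _
    _ ≤ D + |X ω₀| := by gcongr; exact hD ω ω₀

end Covariance

section IndependentSum

variable {Ω : Type*} [MeasurableSpace Ω] {P : Measure Ω} [IsProbabilityMeasure P]
  {X Y : Ω → ℝ} {f u : ℝ → ℝ} {δ : ℝ}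

lemma integral_mul_comp_add_const_le (hX : Measurable X) (hmean : P[X] = 0)
    (hdiam : ∀ ω ω', |X ω - X ω'| ≤ δ) (hf : Measurable f) (hbound : ∃ C, ∀ x, |f x| ≤ C)
    (hslope : ∀ w a b, w - δ ≤ a → a ≤ b → b ≤ w + δ → f b - f a ≤ (b - a) * u w) {y : ℝ}
    (hu : Integrable (fun ω => u (X ω + y)) P) :
    ∫ ω, X ω * f (X ω + y) ∂P ≤ Var[X; P] * ∫ ω, u (X ω + y) ∂P := by
  obtain ⟨C, hC⟩ := hbound
  have hXL2 := memLp_of_forall_abs_sub_le (P := P) hX.aestronglyMeasurable hdiam 2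
  have hfL2 : MemLp (fun ω => f (X ω + y)) 2 P :=
    .of_bound (hf.comp (hX.add_const y)).aestronglyMeasurable C (.of_forall fun ω => hC _)
  have hcov : cov[X, fun ω => f (X ω + y); P] = ∫ ω, X ω * f (X ω + y) ∂P := by
    rw [covariance_eq_sub hXL2 hfL2, hmean, zero_mul, sub_zero]; rfl
  have hcov_le : ∀ ω₀, ∫ ω, X ω * f (X ω + y) ∂P ≤ u (X ω₀ + y) * Var[X; P] := fun ω₀ => by
    rw [← hcov]
    refine covariance_le_mul_variance hXL2 hfL2 fun ω ω' => ?_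
    have hω := abs_le.1 (hdiam ω ω₀)
    have hω' := abs_le.1 (hdiam ω' ω₀)
    rcases le_total (X ω) (X ω') with hle | hle
    · have := hslope (X ω₀ + y) (X ω + y) (X ω' + y) (by linarith) (by linarith) (by linarith)
      nlinarith
    · have := hslope (X ω₀ + y) (X ω' + y) (X ω + y) (by linarith) (by linarith) (by linarith)
      nlinarith
  calc ∫ ω, X ω * f (X ω + y) ∂P = ∫ _, (∫ ω, X ω * f (X ω + y) ∂P) ∂P := by
        rw [integral_const, probReal_univ, one_smul]
    _ ≤ ∫ ω₀, u (X ω₀ + y) * Var[X; P] ∂P :=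
        integral_mono (integrable_const _) (hu.mul_const _) hcov_le
    _ = Var[X; P] * ∫ ω, u (X ω + y) ∂P := by rw [integral_mul_const, mul_comm]

lemma identDistrib_prodMk_of_indepFun {E F : Type*} [MeasurableSpace E] [MeasurableSpace F]
    {X : Ω → E} {Y : Ω → F} (hX : Measurable X) (hY : Measurable Y) (hindep : X ⟂ᵢ[P] Y) :
    IdentDistrib (fun ω => (X ω, Y ω)) (Prod.map X Y) P (P.prod P) where
  aemeasurable_fst := (hX.prodMk hY).aemeasurable
  aemeasurable_snd := (hX.prodMap hY).aemeasurable
  map_eq := by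
    rw [(indepFun_iff_map_prod_eq_prod_map_map hX.aemeasurable hY.aemeasurable).1 hindep,
      Measure.map_prod_map P P hX hY]

lemma integral_mul_comp_add_le (hX : Measurable X) (hY : Measurable Y) (hindep : X ⟂ᵢ[P] Y)
    (hmean : P[X] = 0) (hdiam : ∀ ω ω', |X ω - X ω'| ≤ δ)
    (hf : Measurable f) (hbound : ∃ C, ∀ x, |f x| ≤ C) (hu : Measurable u)
    (hint : Integrable (fun ω => u (X ω + Y ω)) P)
    (hslope : ∀ w a b, w - δ ≤ a → a ≤ b → b ≤ w + δ → f b - f a ≤ (b - a) * u w) :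
    ∫ ω, X ω * f (X ω + Y ω) ∂P ≤ Var[X; P] * ∫ ω, u (X ω + Y ω) ∂P := by
  have hXint : Integrable X P :=
    (memLp_of_forall_abs_sub_le hX.aestronglyMeasurable hdiam 1).integrable le_rfl
  have hdistrib := identDistrib_prodMk_of_indepFun hX hY hindep
  have hleft := hdistrib.comp (u := fun p : ℝ × ℝ => p.1 * f (p.1 + p.2)) (by fun_prop)
  have hright := hdistrib.comp (u := fun p : ℝ × ℝ => u (p.1 + p.2)) (by fun_prop)
  have hleft_int : Integrable (fun ω => X ω * f (X ω + Y ω)) P :=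
    let ⟨C, hC⟩ := hbound
    hXint.mul_bdd (hf.comp (hX.add hY)).aestronglyMeasurable (.of_forall fun ω => hC _)
  have hleft_prod := hleft.integrable_iff.1 hleft_int
  have hright_prod := hright.integrable_iff.1 hint
  calc ∫ ω, X ω * f (X ω + Y ω) ∂P
      = ∫ ω', ∫ ω, X ω * f (X ω + Y ω') ∂P ∂P :=
        hleft.integral_eq.trans (integral_prod_symm _ hleft_prod)
    _ ≤ ∫ ω', Var[X; P] * ∫ ω, u (X ω + Y ω') ∂P ∂P := by
        refine integral_mono_ae hleft_prod.integral_prod_right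
          (hright_prod.integral_prod_right.const_mul _) ?_
        filter_upwards [hright_prod.prod_left_ae] with ω' hω'
        exact integral_mul_comp_add_const_le hX hmean hdiam hf hbound hslope hω'
    _ = Var[X; P] * ∫ ω, u (X ω + Y ω) ∂P := by
        rw [integral_const_mul]
        exact congrArg _ (hright.integral_eq.trans (integral_prod_symm _ hright_prod)).symm

variable {ι : Type*} [Fintype ι] {ξ : ι → Ω → ℝ}

lemma hasSteinWindow_map_sum (hξ : ∀ i, Measurable (ξ i)) (hindep : iIndepFun ξ P)
    (hmean : ∀ i, P[ξ i] = 0) (hdiam : ∀ i ω ω', |ξ i ω - ξ i ω'| ≤ δ)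
    (hvar : ∑ i, Var[ξ i; P] = 1) :
    HasSteinWindow (P.map (fun ω => ∑ i, ξ i ω)) δ := by
  classical
  intro f u hf hbound hu hint hslope
  have hsum : Measurable fun ω => ∑ i, ξ i ω := Finset.measurable_sum _ fun i _ => hξ i
  rw [integrable_map_measure hu.aestronglyMeasurable hsum.aemeasurable] at hint
  rw [integral_map hsum.aemeasurable (f := fun x => x * f x) (by fun_prop),
    integral_map hsum.aemeasurable hu.aestronglyMeasurable]
  have hterm : ∀ i, ∫ ω, ξ i ω * f (∑ j, ξ j ω) ∂P ≤ Var[ξ i; P] * ∫ ω, u (∑ j, ξ j ω) ∂P := by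
    intro i
    set rest : Ω → ℝ := ∑ j ∈ Finset.univ.erase i, ξ j with hrest_def
    have hrest : ∀ ω, ∑ j, ξ j ω = ξ i ω + rest ω := fun ω => by
      rw [hrest_def, Finset.sum_apply, Finset.add_sum_erase _ (ξ · ω) (Finset.mem_univ i)]
    have hindep_rest : ξ i ⟂ᵢ[P] rest :=
      (hindep.indepFun_finsetSum_of_notMem hξ (Finset.notMem_erase i _)).symm
    simp only [Function.comp_def, hrest] at hint ⊢
    exact integral_mul_comp_add_le (hξ i) (by fun_prop) hindep_rest (hmean i) (hdiam i) hf hbound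
      hu hint hslope
  obtain ⟨C, hC⟩ := hbound
  have hξint : ∀ i, Integrable (ξ i) P := fun i =>
    (memLp_of_forall_abs_sub_le (hξ i).aestronglyMeasurable (hdiam i) 1).integrable le_rfl
  have hterm_int : ∀ i, Integrable (fun ω => ξ i ω * f (∑ j, ξ j ω)) P := fun i =>
    (hξint i).mul_bdd (hf.comp hsum).aestronglyMeasurable (.of_forall fun ω => hC _)
  calc ∫ ω, (∑ i, ξ i ω) * f (∑ j, ξ j ω) ∂P
      = ∑ i, ∫ ω, ξ i ω * f (∑ j, ξ j ω) ∂P := by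
        simp only [Finset.sum_mul]
        exact integral_finsetSum _ fun i _ => hterm_int i
    _ ≤ ∑ i, Var[ξ i; P] * ∫ ω, u (∑ j, ξ j ω) ∂P := Finset.sum_le_sum fun i _ => hterm i
    _ = ∫ ω, u (∑ j, ξ j ω) ∂P := by rw [← Finset.sum_mul, hvar, one_mul]

lemma integral_abs_le_one_of_variance_eq_one {W : Ω → ℝ} (hW : MemLp W 2 P) (hmean : P[W] = 0)
    (hvar : Var[W; P] = 1) : ∫ ω, |W ω| ∂P ≤ 1 := by
  have hsq : ∫ ω, W ω ^ 2 ∂P = 1 := by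
    rw [← variance_of_integral_eq_zero hW.aemeasurable hmean, hvar]
  have habs : ∀ ω, |W ω| ≤ (W ω ^ 2 + 1) / 2 := fun ω => by
    nlinarith [sq_nonneg (|W ω| - 1), sq_abs (W ω)]
  calc ∫ ω, |W ω| ∂P ≤ ∫ ω, (W ω ^ 2 + 1) / 2 ∂P :=
        integral_mono (hW.integrable one_le_two).abs
          ((hW.integrable_sq.add (integrable_const 1)).div_const 2) habs
    _ = 1 := by
        rw [integral_div, integral_add hW.integrable_sq (integrable_const 1), hsq, integral_const,
          probReal_univ, one_smul]
        norm_num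

theorem abs_measureReal_sum_le_sub_stdNormalCDF_le_of_standardized
    (hξ : ∀ i, Measurable (ξ i)) (hindep : iIndepFun ξ P) (hmean : ∀ i, P[ξ i] = 0)
    (hdiam : ∀ i ω ω', |ξ i ω - ξ i ω'| ≤ δ) (hvar : ∑ i, Var[ξ i; P] = 1) (z : ℝ) :
    |P.real {ω | ∑ i, ξ i ω ≤ z} - Φ z| ≤ 7 * δ := by
  have hδ : 0 ≤ δ := by
    obtain ⟨i, -, -⟩ := Finset.exists_ne_zero_of_sum_ne_zero (hvar.trans_ne one_ne_zero)
    obtain ⟨ω⟩ := P.nonempty_of_neZero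
    exact (abs_nonneg _).trans (hdiam i ω ω)
  have hξL2 : ∀ i, MemLp (ξ i) 2 P := fun i =>
    memLp_of_forall_abs_sub_le (hξ i).aestronglyMeasurable (hdiam i) 2
  set W : Ω → ℝ := fun ω => ∑ i, ξ i ω with hW_def
  have hW : Measurable W := Finset.measurable_sum _ fun i _ => hξ i
  have hWL2 : MemLp W 2 P := memLp_finsetSum _ fun i _ => hξL2 i
  have hWmean : P[W] = 0 := by
    rw [hW_def, integral_finsetSum _ fun i _ => (hξL2 i).integrable one_le_two]
    exact Finset.sum_eq_zero fun i _ => hmean i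
  have hWvar : Var[W; P] = 1 := by
    rw [← hvar, ← IndepFun.variance_sum (fun i _ => hξL2 i) fun i _ j _ hij => hindep.indepFun hij,
      hW_def, Finset.sum_fn]
  have hlaw_int : Integrable id (P.map W) :=
    (integrable_map_measure (by fun_prop) hW.aemeasurable).2 (hWL2.integrable one_le_two)
  have hlaw_abs : ∫ x, |x| ∂(P.map W) ≤ 1 := by
    rw [integral_map hW.aemeasurable (by fun_prop)]
    exact integral_abs_le_one_of_variance_eq_one hWL2 hWmean hWvar
  have : IsProbabilityMeasure (P.map W) := Measure.isProbabilityMeasure_map hW.aemeasurable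
  have hwindow : HasSteinWindow (P.map W) δ := hasSteinWindow_map_sum hξ hindep hmean hdiam hvar
  have hbound := hwindow.abs_measureReal_Iic_sub_stdNormalCDF_le hδ hlaw_int hlaw_abs z
  rwa [map_measureReal_apply hW measurableSet_Iic] at hbound

theorem abs_measureReal_standardized_sum_le_sub_stdNormalCDF_le {X : ι → Ω → ℝ} {D : ℝ}
    (hX : ∀ i, Measurable (X i)) (hindep : iIndepFun X P)
    (hdiam : ∀ i ω ω', |X i ω - X i ω'| ≤ D) (hvar : 0 < ∑ i, Var[X i; P]) (z : ℝ) :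
    |P.real {ω | (∑ i, X i ω - ∑ i, P[X i]) / √(∑ i, Var[X i; P]) ≤ z} - Φ z|
      ≤ 7 * (D / √(∑ i, Var[X i; P])) := by
  set σ := √(∑ i, Var[X i; P])
  have hσ : 0 < σ := Real.sqrt_pos.2 hvar
  have hσ_sq : σ ^ 2 = ∑ i, Var[X i; P] := Real.sq_sqrt hvar.le
  have hsum : ∀ ω, (∑ i, X i ω - ∑ i, P[X i]) / σ = ∑ i, (X i ω - P[X i]) / σ := fun ω => by
    rw [← Finset.sum_sub_distrib, Finset.sum_div]
  have hindep' : iIndepFun (fun i ω => (X i ω - P[X i]) / σ) P :=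
    hindep.comp (fun i t => (t - ∫ ω, X i ω ∂P) / σ) fun i => by fun_prop
  simp only [hsum]
  refine abs_measureReal_sum_le_sub_stdNormalCDF_le_of_standardized (by fun_prop) hindep'
    (fun i => ?_) (fun i ω ω' => ?_) ?_ z
  · have hXint : Integrable (X i) P :=
      (memLp_of_forall_abs_sub_le (hX i).aestronglyMeasurable (hdiam i) 1).integrable le_rfl
    rw [integral_div, integral_sub hXint (integrable_const _), integral_const, probReal_univ,
      one_smul, sub_self, zero_div]
  · rw [← sub_div, sub_sub_sub_cancel_right, abs_div, abs_of_pos hσ]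
    exact div_le_div_of_nonneg_right (hdiam i ω ω') hσ.le
  · have hvar_term : ∀ i, Var[fun ω => (X i ω - P[X i]) / σ; P] = Var[X i; P] / σ ^ 2 := fun i => by
      simp only [div_eq_mul_inv]
      rw [variance_mul_const, variance_sub_const (hX i).aestronglyMeasurable, inv_pow]
    simp only [hvar_term]
    rw [← Finset.sum_div, ← hσ_sq, div_self (pow_pos hσ 2).ne']

end IndependentSum

section UniformOn

variable {α : Type*} [Fintype α] [MeasurableSpace α] [MeasurableSingletonClass α]

lemma integral_uniformOn_univ (f : α → ℝ) :
    ∫ a, f a ∂uniformOn univ = (∑ a, f a) / Fintype.card α := by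
  rw [integral_fintype .of_finite, Finset.sum_div]
  refine Finset.sum_congr rfl fun a _ => ?_
  rw [measureReal_def, uniformOn_univ, Measure.count_singleton, smul_eq_mul, mul_comm,
    ENNReal.toReal_div, ENNReal.toReal_one, ENNReal.toReal_natCast, mul_one_div]

lemma pi_uniformOn_univ {ι : Type*} [Fintype ι] {α : ι → Type*} [∀ i, Finite (α i)]
    [∀ i, MeasurableSpace (α i)] [∀ i, MeasurableSingletonClass (α i)] :
    Measure.pi (fun i => uniformOn (univ : Set (α i))) = uniformOn univ := by
  have := fun i => Fintype.ofFinite (α i)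
  have := Fintype.ofFinite (∀ i, α i)
  refine Measure.ext_of_singleton fun a => ?_
  rw [Measure.pi_singleton]
  simp only [uniformOn_univ, Measure.count_singleton, one_div, ← Nat.card_eq_fintype_card,
    Nat.card_pi, Nat.cast_prod]
  exact (ENNReal.prod_inv_distrib fun i _ j _ _ => .inr (ENNReal.natCast_ne_top _)).symm

lemma integral_fin_uniformOn_univ (k : ℕ) :
    ∫ j : Fin (k + 1), (j : ℝ) ∂uniformOn univ = k / 2 := by
  have hsum : ∑ j : Fin (k + 1), (j : ℝ) = k * (k + 1) / 2 := by
    rw [Fin.sum_univ_eq_sum_range (fun j => (j : ℝ))]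
    induction k with
    | zero => simp
    | succ k ih => rw [Finset.sum_range_succ, ih]; push_cast; ring
  rw [integral_uniformOn_univ, hsum, Fintype.card_fin]
  push_cast
  field_simp

lemma variance_fin_uniformOn_univ (k : ℕ) :
    Var[fun j : Fin (k + 1) => (j : ℝ); uniformOn univ] = k * (k + 2) / 12 := by
  have hsum : ∑ j : Fin (k + 1), (j : ℝ) ^ 2 = k * (k + 1) * (2 * k + 1) / 6 := by
    rw [Fin.sum_univ_eq_sum_range (fun j => (j : ℝ) ^ 2)]
    induction k with
    | zero => simp
    | succ k ih => rw [Finset.sum_range_succ, ih]; push_cast; ring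
  rw [variance_eq_sub .of_discrete, integral_fin_uniformOn_univ]
  simp only [Pi.pow_apply]
  rw [integral_uniformOn_univ, hsum, Fintype.card_fin]
  push_cast
  field_simp
  ring

end UniformOn

section LehmerCode

variable {n : ℕ}

/-- The permutation of `Fin (n + 1)` in one-line notation `p, e'`, where `e'` is the one-line
notation of `e` with its values relabelled increasingly so as to avoid `p`. -/
def insertFirst (p : Fin (n + 1)) (e : Equiv.Perm (Fin n)) : Equiv.Perm (Fin (n + 1)) :=
  (finSuccEquiv n).trans (e.optionCongr.trans (finSuccEquiv' p).symm)

@[simp]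
lemma insertFirst_zero (p : Fin (n + 1)) (e : Equiv.Perm (Fin n)) : insertFirst p e 0 = p := by
  simp [insertFirst]

@[simp]
lemma insertFirst_succ (p : Fin (n + 1)) (e : Equiv.Perm (Fin n)) (i : Fin n) :
    insertFirst p e i.succ = p.succAbove (e i) := by
  simp [insertFirst]

lemma insertFirst_bijective :
    Function.Bijective fun x : Fin (n + 1) × Equiv.Perm (Fin n) => insertFirst x.1 x.2 := by
  refine (Fintype.bijective_iff_injective_and_card _).2 ⟨?_, ?_⟩
  · rintro ⟨p, e⟩ ⟨q, f⟩ h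
    obtain rfl : p = q := by simpa using DFunLike.congr_fun h 0
    congr 1
    ext1 i
    simpa using DFunLike.congr_fun h i.succ
  · simp [Fintype.card_perm, Nat.factorial_succ]

lemma inversions_eq_sum_card (π : Equiv.Perm (Fin n)) :
    inversions π = ∑ i, #{j | i < j ∧ π j < π i} := by
  simp only [inversions, Finset.card_filter, ← Finset.univ_product_univ, Finset.sum_product]

lemma inversions_insertFirst (p : Fin (n + 1)) (e : Equiv.Perm (Fin n)) :
    inversions (insertFirst p e) = p + inversions e := by
  have hfirst : #{i : Fin n | p.succAbove (e i) < p} = p := by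
    calc #{i : Fin n | p.succAbove (e i) < p} = #{i : Fin n | (i : ℕ) < p} :=
          Finset.card_equiv e fun i => by
            simp only [Finset.mem_filter_univ, Fin.succAbove_lt_iff_castSucc_lt]; rfl
      _ = p := by rw [Fin.card_filter_val_lt, min_eq_right p.is_le]
  simp only [inversions_eq_sum_card, Fin.sum_univ_succ, Fin.card_filter_univ_succ]
  simp [hfirst]

/-- The Lehmer codes of the permutations of `Fin n`. Digits are indexed from the right: the `i`-th
counts the smaller ones among the `i` entries to the right of a given entry. -/
abbrev LehmerCode (n : ℕ) : Type := ∀ i : Fin n, Fin (i + 1)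

theorem exists_equiv_lehmerCode_inversions_eq_sum (n : ℕ) :
    ∃ code : Equiv.Perm (Fin n) ≃ LehmerCode n, ∀ π, inversions π = ∑ i, (code π i : ℕ) := by
  induction n with
  | zero => exact ⟨Equiv.ofUnique _ _, fun π => by simp [inversions]⟩
  | succ n ih =>
    obtain ⟨code, hcode⟩ := ih
    let decode : Fin (n + 1) × LehmerCode n ≃ Equiv.Perm (Fin (n + 1)) :=
      ((Equiv.refl _).prodCongr code.symm).trans (Equiv.ofBijective _ insertFirst_bijective)
    let append : Fin (n + 1) × LehmerCode n ≃ LehmerCode (n + 1) :=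
      Fin.snocEquiv fun i : Fin (n + 1) => Fin (i + 1)
    refine ⟨decode.symm.trans append, decode.forall_congr_right.1 fun ⟨p, c⟩ => ?_⟩
    have hdecode : inversions (decode (p, c)) = p + ∑ i, (c i : ℕ) := by
      change inversions (insertFirst p (code.symm c)) = _
      rw [inversions_insertFirst, hcode, Equiv.apply_symm_apply]
    rw [hdecode, Fin.sum_univ_castSucc, add_comm]
    simp [append]

lemma sum_inversions_div_factorial (F : ℕ → ℝ) :
    (∑ π : Equiv.Perm (Fin n), F (inversions π)) / n.factorial
      = ∫ c : LehmerCode n, F (∑ i, (c i : ℕ)) ∂uniformOn univ := by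
  obtain ⟨code, hcode⟩ := exists_equiv_lehmerCode_inversions_eq_sum n
  have hcard : Fintype.card (LehmerCode n) = n.factorial := by
    rw [← Fintype.card_congr code, Fintype.card_perm, Fintype.card_fin]
  simp only [integral_uniformOn_univ, hcard, hcode]
  rw [code.sum_comp fun c => F (∑ i, (c i : ℕ))]

lemma card_inversions_div_factorial (p : ℕ → Prop) [DecidablePred p] :
    (#{π : Equiv.Perm (Fin n) | p (inversions π)} : ℝ) / n.factorial
      = (uniformOn univ).real {c : LehmerCode n | p (∑ i, (c i : ℕ))} := by
  rw [Finset.card_filter, Nat.cast_sum,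
    sum_inversions_div_factorial fun m => ((if p m then 1 else 0 : ℕ) : ℝ),
    ← integral_indicator_one .of_discrete]
  congr! 2 with c
  simp [indicator_apply]

lemma iIndepFun_lehmerDigit :
    iIndepFun (fun (i : Fin n) (c : LehmerCode n) => (c i : ℝ)) (uniformOn univ) := by
  rw [← pi_uniformOn_univ]
  exact iIndepFun_pi (X := fun (i : Fin n) (j : Fin (i + 1)) => (j : ℝ)) fun i => .of_discrete

lemma integral_lehmerDigit (i : Fin n) :
    ∫ c : LehmerCode n, (c i : ℝ) ∂uniformOn univ = i / 2 := by
  rw [← integral_fin_uniformOn_univ, ← pi_uniformOn_univ]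
  exact integral_comp_eval (X := fun i : Fin n => Fin (i + 1)) (i := i) (f := fun j => (j : ℝ))
    .of_discrete

lemma variance_lehmerDigit (i : Fin n) :
    Var[fun c : LehmerCode n => (c i : ℝ); uniformOn univ] = i * (i + 2) / 12 := by
  rw [← variance_fin_uniformOn_univ, ← pi_uniformOn_univ]
  exact (measurePreserving_eval (fun i : Fin n => uniformOn (univ : Set (Fin (i + 1)))) i)
    |>.variance_fun_comp (f := fun j => (j : ℝ)) .of_discrete

lemma sum_integral_lehmerDigit (n : ℕ) :
    ∑ i, ∫ c : LehmerCode n, (c i : ℝ) ∂uniformOn univ = n * (n - 1) / 4 := by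
  simp only [integral_lehmerDigit]
  rw [Fin.sum_univ_eq_sum_range fun i => (i : ℝ) / 2]
  induction n with
  | zero => simp
  | succ n ih => rw [Finset.sum_range_succ, ih]; push_cast; ring

lemma sum_variance_lehmerDigit (n : ℕ) :
    ∑ i, Var[fun c : LehmerCode n => (c i : ℝ); uniformOn univ]
      = n * (2 * n + 5) * (n - 1) / 72 := by
  simp only [variance_lehmerDigit]
  rw [Fin.sum_univ_eq_sum_range fun i => (i : ℝ) * (i + 2) / 12]
  induction n with
  | zero => simp
  | succ n ih => rw [Finset.sum_range_succ, ih]; push_cast; ring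

lemma abs_lehmerDigit_sub_le (i : Fin n) (c c' : LehmerCode n) :
    |(c i : ℝ) - (c' i : ℝ)| ≤ n := by
  have hdigit : ∀ c : LehmerCode n, (c i : ℝ) ≤ n := fun c =>
    Nat.cast_le.2 ((c i).is_le.trans i.is_lt.le)
  exact abs_sub_le_of_nonneg_of_le (Nat.cast_nonneg _) (hdigit c) (Nat.cast_nonneg _) (hdigit c')

end LehmerCode

section InversionMoments

variable (n : ℕ)

theorem mean_inversions :
    (∑ π : Equiv.Perm (Fin n), (inversions π : ℝ)) / n.factorial = n * (n - 1) / 4 := by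
  rw [sum_inversions_div_factorial fun m => (m : ℝ), ← sum_integral_lehmerDigit]
  simp only [Nat.cast_sum]
  exact integral_finsetSum _ fun i _ => .of_finite

theorem variance_inversions :
    (∑ π : Equiv.Perm (Fin n), (inversions π : ℝ) ^ 2) / n.factorial - (n * (n - 1) / 4) ^ 2
      = n * (2 * n + 5) * (n - 1) / 72 := by
  rw [sum_inversions_div_factorial fun m => (m : ℝ) ^ 2, ← sum_integral_lehmerDigit,
    ← sum_variance_lehmerDigit, ← integral_finsetSum _ fun i _ => .of_finite,
    ← IndepFun.variance_sum (fun i _ => .of_discrete) fun i _ j _ hij =>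
      iIndepFun_lehmerDigit.indepFun hij,
    variance_eq_sub .of_discrete]
  simp

end InversionMoments

lemma cube_div_le_inversionVariance {n : ℕ} (hn : 2 ≤ n) :
    (n : ℝ) ^ 3 / 36 ≤ n * (2 * n + 5) * (n - 1) / 72 := by
  have hn_real : (2 : ℝ) ≤ n := mod_cast hn
  nlinarith [mul_nonneg (Nat.cast_nonneg (α := ℝ) n) (by linarith : (0 : ℝ) ≤ 3 * n - 5)]

lemma inversionVariance_pos {n : ℕ} (hn : 2 ≤ n) : (0 : ℝ) < n * (2 * n + 5) * (n - 1) / 72 :=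
  have hn_pos : (0 : ℝ) < n := mod_cast zero_lt_two.trans_le hn
  (div_pos (pow_pos hn_pos 3) (by norm_num)).trans_le (cube_div_le_inversionVariance hn)

lemma div_sqrt_inversionVariance_le {n : ℕ} (hn : 2 ≤ n) :
    n / √(n * (2 * n + 5) * (n - 1) / 72 : ℝ) ≤ 6 / √n := by
  have hn_pos : (0 : ℝ) < n := mod_cast zero_lt_two.trans_le hn
  calc n / √(n * (2 * n + 5) * (n - 1) / 72 : ℝ) ≤ n / √((n : ℝ) ^ 3 / 36) :=
        div_le_div_of_nonneg_left hn_pos.le (by positivity)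
          (Real.sqrt_le_sqrt (cube_div_le_inversionVariance hn))
    _ = 6 / √n := by
        rw [show (n : ℝ) ^ 3 / 36 = (n / 6) ^ 2 * n by ring, Real.sqrt_mul (by positivity),
          Real.sqrt_sq (by positivity)]
        field_simp

end

open scoped Classical in
/-- The number of inversions of a uniformly random permutation has mean `n(n-1)/4`,
variance `n(2n+5)(n-1)/72`, and satisfies a Berry–Esseen bound with rate `1/√n`. -/
theorem inversions_mean_variance_berry_esseen :
    (∀ n : ℕ, 1 ≤ n →
      (∑ π : Equiv.Perm (Fin n), (inversions π : ℝ)) / (Nat.factorial n : ℝ)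
          = (n : ℝ) * ((n : ℝ) - 1) / 4 ∧
      (∑ π : Equiv.Perm (Fin n), (inversions π : ℝ) ^ 2) / (Nat.factorial n : ℝ)
          - ((n : ℝ) * ((n : ℝ) - 1) / 4) ^ 2
          = (n : ℝ) * (2 * (n : ℝ) + 5) * ((n : ℝ) - 1) / 72) ∧
    ∃ C : ℝ, 0 < C ∧ ∀ n : ℕ, 2 ≤ n → ∀ x : ℝ,
      |(((Finset.univ.filter (fun π : Equiv.Perm (Fin n) =>
              ((inversions π : ℝ) - (n : ℝ) * ((n : ℝ) - 1) / 4)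
                / Real.sqrt ((n : ℝ) * (2 * (n : ℝ) + 5) * ((n : ℝ) - 1) / 72) ≤ x)).card : ℝ)
            / (Nat.factorial n : ℝ)) - stdNormalCDF x| ≤ C / Real.sqrt n := by
  refine ⟨fun n _ => ⟨mean_inversions n, variance_inversions n⟩, 42, by norm_num, fun n hn x => ?_⟩
  have hdigits := abs_measureReal_standardized_sum_le_sub_stdNormalCDF_le
    (fun _ => .of_discrete) (iIndepFun_lehmerDigit (n := n)) abs_lehmerDigit_sub_le
    ((inversionVariance_pos hn).trans_eq (sum_variance_lehmerDigit n).symm) x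
  simp only [sum_integral_lehmerDigit, sum_variance_lehmerDigit, ← Nat.cast_sum] at hdigits
  rw [card_inversions_div_factorial fun m =>
    ((m : ℝ) - n * (n - 1) / 4) / √(n * (2 * n + 5) * (n - 1) / 72) ≤ x]
  calc _ ≤ 7 * (n / √(n * (2 * n + 5) * (n - 1) / 72)) := hdigits
    _ ≤ 7 * (6 / √n) :=
        mul_le_mul_of_nonneg_left (div_sqrt_inversionVariance_le hn) (by norm_num)
    _ = 42 / √n := by ring
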